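/- Let C be a binary linear code of length N with weight distribution A(w), used over the binary erasure channel, and let ε* ∈ (0,1) satisfy P_MAP(ε*) = 1/2. Then for every integer 1 ≤ W ≤ N and every ε* < ε < 1: P_MAP(ε) ≥ Φ(√W·(√(−ln ε*) − √(−ln ε))) − 2·√(−ln ε*)·√W·A(W, ε). -/

import Mathlib

open scoped Classical
open Finset

noncomputable section

/-- Erasure patterns and codewords: vectors in 𝔽₂^N. -/
abbrev Pattern (N : ℕ) := Fin N → ZMod 2

/-- Hamming weight. -/
def wH {N : ℕ} (x : Pattern N) : ℕ := hammingNorm x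

/-- `ω` covers `x` if the support of `x` is contained in the support of `ω`. -/
def covers {N : ℕ} (ω x : Pattern N) : Prop := ∀ i, x i ≠ 0 → ω i ≠ 0

/-- Product Bernoulli(ε) measure of a set of patterns. -/
def muE {N : ℕ} (ε : ℝ) (S : Finset (Pattern N)) : ℝ :=
  ∑ ω ∈ S, ε ^ wH ω * (1 - ε) ^ (N - wH ω)

/-- Erasure patterns causing a block-MAP error over the BEC. -/
def errBEC {N : ℕ} (C : Submodule (ZMod 2) (Pattern N)) : Finset (Pattern N) :=
  univ.filter (fun ω => ∃ x ∈ C, x ≠ 0 ∧ covers ω x)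

/-- Block-MAP error probability over BEC(ε). -/
def Pmap {N : ℕ} (C : Submodule (ZMod 2) (Pattern N)) (ε : ℝ) : ℝ :=
  muE ε (errBEC C)

/-- Weight distribution A(w) of the code. -/
def Aw {N : ℕ} (C : Submodule (ZMod 2) (Pattern N)) (w : ℕ) : ℕ :=
  (univ.filter (fun x : Pattern N => x ∈ C ∧ wH x = w)).card

/-- A(W, z) = ∑_{w=1}^W A(w) z^w. -/
def AW {N : ℕ} (C : Submodule (ZMod 2) (Pattern N)) (W : ℕ) (z : ℝ) : ℝ :=
  ∑ w ∈ Finset.Icc 1 W, (Aw C w : ℝ) * z ^ w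

/-- Standard normal CDF. -/
def Phi (x : ℝ) : ℝ := ∫ u in Set.Iic x, Real.exp (-u ^ 2 / 2) / Real.sqrt (2 * Real.pi)

open Filter Topology

/-!
Let `I = φ ∘ Φ⁻¹` be the Gaussian isoperimetric profile. Its second derivative is `-1 / I`, and a
maximum principle turns this into a two-point inequality, which by induction on the length gives
`I (P S) ≤ √(-2 log ε) · E √h` for every increasing set `S` of erasure patterns, where `h` counts
the pivotal coordinates. By Russo's formula the derivative of `P S` is `E h / ε`.

If `S` is the event of a MAP error, a pattern with a pivotal coordinate covers exactly one nonzero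
codeword, and its pivotal coordinates form the support of that codeword. So `h` is zero or the
weight of a covered codeword, and `√W · √h ≤ h` except when that weight is smaller than `W`.
Together these facts say that `Φ⁻¹ (P S)` grows at least as fast as
`-√(2W) · √(-log ε)`, up to the contribution of the low-weight codewords. A comparison argument
integrates this differential inequality from `ε*` on, where `P S ≥ 1 / 2` and `I` is decreasing.
-/

/-! ### Calculus -/

lemma nonpos_of_deriv_deriv_pos_of_pos {g : ℝ → ℝ} {a b : ℝ} (hg : ContinuousOn g (Set.Icc a b))
    (ha : g a ≤ 0) (hb : g b ≤ 0)
    (hconvex : ∀ x ∈ Set.Ioo a b, 0 < g x → 0 < deriv (deriv g) x) :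
    ∀ x ∈ Set.Icc a b, g x ≤ 0 := by
  intro x hx
  obtain ⟨m, hm, hmax⟩ := isCompact_Icc.exists_isMaxOn ⟨x, hx⟩ hg
  refine (hmax hx).trans (not_lt.1 fun hpos => ?_)
  have hm_Ioo : m ∈ Set.Ioo a b :=
    ⟨hm.1.lt_of_ne fun h => (h ▸ ha).not_gt hpos, hm.2.lt_of_ne fun h => (h ▸ hb).not_gt hpos⟩
  have h_nhds : Set.Icc a b ∈ 𝓝 m := Icc_mem_nhds hm_Ioo.1 hm_Ioo.2
  have h_localMax : IsLocalMax g m := hmax.isLocalMax h_nhds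
  have h_localMin : IsLocalMin g m := isLocalMin_of_deriv_deriv_pos (hconvex m hm_Ioo hpos)
    h_localMax.deriv_eq_zero (hg.continuousAt h_nhds)
  have h_const : g =ᶠ[𝓝 m] fun _ => g m :=
    h_localMax.and h_localMin |>.mono fun _ h => le_antisymm h.1 h.2
  have h_deriv2 : deriv (deriv g) m = 0 := by
    simp only [h_const.deriv.deriv_eq, deriv_const', deriv_const]
  exact (hconvex m hm_Ioo hpos).ne' h_deriv2

lemma nonneg_of_deriv_nonneg_of_neg {D D' : ℝ → ℝ} {a b : ℝ} (ha : 0 ≤ D a)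
    (hD : ∀ x ∈ Set.Icc a b, HasDerivAt D (D' x) x)
    (hD' : ∀ x ∈ Set.Ico a b, D x < 0 → 0 ≤ D' x) :
    ∀ x ∈ Set.Icc a b, 0 ≤ D x := by
  intro x hx
  -- Comparing `-D` with barriers of slope `η` makes the inequality of derivatives strict.
  have h_barrier : ∀ η > 0, -D x ≤ η * (x - a + 1) := fun η hη =>
    image_le_of_deriv_right_lt_deriv_boundary' (f := fun y => -D y) (f' := fun y => -D' y)
      (B := fun y => η * (y - a + 1)) (B' := fun _ => η)
      (fun y hy => (hD y hy).neg.continuousAt.continuousWithinAt)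
      (fun y hy => (hD y (Set.Ico_subset_Icc_self hy)).neg.hasDerivWithinAt)
      (by simpa using (neg_nonpos.2 ha).trans hη.le) (by fun_prop)
      (fun y _ => (((((hasDerivAt_id y).sub_const a).add_const 1).const_mul η).congr_deriv
        (mul_one η)).hasDerivWithinAt)
      (fun y hy h_eq => by
        have h_pos : 0 < η * (y - a + 1) := mul_pos hη (by linarith [hy.1])
        linarith [hD' y hy (by linarith)]) hx
  have h_limit : Tendsto (fun η => η * (x - a + 1)) (𝓝[>] 0) (𝓝 0) :=
    ((continuous_mul_const (x - a + 1)).tendsto' 0 0 (zero_mul _)).mono_left nhdsWithin_le_nhds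
  exact neg_nonpos.1 (ge_of_tendsto h_limit (eventually_mem_nhdsWithin.mono h_barrier))

lemma one_sub_exp_neg_sq_le {x : ℝ} (hx : 0 ≤ x) : 1 - Real.exp (-x ^ 2) ≤ x := by
  rcases le_total x 1 with h | h
  · nlinarith [Real.add_one_le_exp (-x ^ 2)]
  · linarith [Real.exp_pos (-x ^ 2)]

lemma one_sub_pow_le_sqrt_neg_log_mul_sqrt {s : ℝ} (hs : s ∈ Set.Ioc (0 : ℝ) 1) (w : ℕ) :
    1 - s ^ w ≤ √(-Real.log s) * √w := by
  have h_log : 0 ≤ -Real.log s := neg_nonneg.2 (Real.log_nonpos hs.1.le hs.2)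
  have h_exp : s ^ w = Real.exp (-(√(-Real.log s) * √w) ^ 2) := by
    rw [mul_pow, Real.sq_sqrt h_log, Real.sq_sqrt w.cast_nonneg, neg_mul, neg_neg, mul_comm,
      Real.exp_nat_mul, Real.exp_log hs.1]
  rw [h_exp]
  exact one_sub_exp_neg_sq_le (by positivity)

lemma pow_sub_pow_le {s t : ℝ} (hs : 0 < s) (hst : s ≤ t) (ht : t ≤ 1) (w : ℕ) :
    t ^ w - s ^ w ≤ √(-Real.log s) * √w * t ^ w := by
  have ht0 : 0 ≤ t := hs.le.trans hst
  calc t ^ w - s ^ w ≤ t ^ w - s ^ w * t ^ w :=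
        sub_le_sub_left (mul_le_of_le_one_right (by positivity) (pow_le_one₀ ht0 ht)) _
    _ = (1 - s ^ w) * t ^ w := by ring
    _ ≤ √(-Real.log s) * √w * t ^ w := mul_le_mul_of_nonneg_right
        (one_sub_pow_le_sqrt_neg_log_mul_sqrt ⟨hs, hst.trans ht⟩ w) (by positivity)

lemma hasDerivAt_sqrt_neg_log {t : ℝ} (ht : t ∈ Set.Ioo (0 : ℝ) 1) :
    HasDerivAt (fun t => √(-Real.log t)) (-(1 / (2 * √(-Real.log t)) / t)) t := by
  have h_log : 0 < -Real.log t := neg_pos.2 (Real.log_neg ht.1 ht.2)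
  refine (HasDerivAt.sqrt (Real.hasDerivAt_log ht.1.ne').fun_neg h_log.ne').congr_deriv ?_
  have := ht.1.ne'
  field_simp

/-! ### The Gaussian isoperimetric profile -/

/-- The standard normal density, written with the integrand of `Phi`. -/
def stdNormalPDF (u : ℝ) : ℝ := Real.exp (-u ^ 2 / 2) / √(2 * Real.pi)

lemma stdNormalPDF_pos (u : ℝ) : 0 < stdNormalPDF u := by
  unfold stdNormalPDF
  positivity

lemma stdNormalPDF_eq_gaussianPDFReal :
    stdNormalPDF = ProbabilityTheory.gaussianPDFReal 0 1 := by
  funext u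
  simp only [stdNormalPDF, ProbabilityTheory.gaussianPDFReal, NNReal.coe_one, sub_zero, mul_one]
  ring

lemma integrable_stdNormalPDF : MeasureTheory.Integrable stdNormalPDF :=
  stdNormalPDF_eq_gaussianPDFReal ▸ ProbabilityTheory.integrable_gaussianPDFReal 0 1

lemma hasDerivAt_stdNormalPDF (u : ℝ) : HasDerivAt stdNormalPDF (-u * stdNormalPDF u) u := by
  have h_exponent : HasDerivAt (fun u : ℝ => -u ^ 2 / 2) (-u) u :=
    (((hasDerivAt_pow 2 u).neg).div_const 2).congr_deriv (by push_cast; ring)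
  exact (h_exponent.exp.div_const _).congr_deriv (by rw [stdNormalPDF]; ring)

lemma continuous_stdNormalPDF : Continuous stdNormalPDF := by
  unfold stdNormalPDF
  fun_prop

lemma tendsto_stdNormalPDF_atTop : Tendsto stdNormalPDF atTop (𝓝 0) := by
  have h_exponent : Tendsto (fun u : ℝ => -u ^ 2 / 2) atTop atBot :=
    (tendsto_neg_atTop_atBot.comp (tendsto_pow_atTop two_ne_zero)).atBot_div_const two_pos
  have h_quotient := (Real.tendsto_exp_atBot.comp h_exponent).div_const √(2 * Real.pi)
  rwa [zero_div] at h_quotient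

lemma tendsto_stdNormalPDF_atBot : Tendsto stdNormalPDF atBot (𝓝 0) := by
  refine (tendsto_stdNormalPDF_atTop.comp tendsto_neg_atBot_atTop).congr fun u => ?_
  simp only [Function.comp_apply, stdNormalPDF, neg_sq]

lemma Phi_eq_cdf_gaussianReal :
    Phi = ProbabilityTheory.cdf (ProbabilityTheory.gaussianReal 0 1) := by
  funext x
  have h_nonneg : 0 ≤ ∫ u in Set.Iic x, ProbabilityTheory.gaussianPDFReal 0 1 u :=
    MeasureTheory.integral_nonneg fun _ => ProbabilityTheory.gaussianPDFReal_nonneg 0 1 _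
  rw [ProbabilityTheory.cdf_eq_real, MeasureTheory.measureReal_def,
    ProbabilityTheory.gaussianReal_apply_eq_integral 0 one_ne_zero, ENNReal.toReal_ofReal h_nonneg,
    ← stdNormalPDF_eq_gaussianPDFReal]
  rfl

lemma tendsto_Phi_atBot : Tendsto Phi atBot (𝓝 0) :=
  Phi_eq_cdf_gaussianReal ▸ ProbabilityTheory.tendsto_cdf_atBot _

lemma tendsto_Phi_atTop : Tendsto Phi atTop (𝓝 1) :=
  Phi_eq_cdf_gaussianReal ▸ ProbabilityTheory.tendsto_cdf_atTop _

lemma hasDerivAt_Phi (x : ℝ) : HasDerivAt Phi (stdNormalPDF x) x := by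
  have h_interval : Phi = fun y => Phi 0 + ∫ u in (0 : ℝ)..y, stdNormalPDF u := by
    funext y
    rw [← intervalIntegral.integral_Iic_sub_Iic integrable_stdNormalPDF.integrableOn
      integrable_stdNormalPDF.integrableOn]
    exact (add_sub_cancel _ _).symm
  rw [h_interval]
  exact (intervalIntegral.integral_hasDerivAt_right
    (continuous_stdNormalPDF.intervalIntegrable _ _)
    continuous_stdNormalPDF.stronglyMeasurable.stronglyMeasurableAtFilter
    continuous_stdNormalPDF.continuousAt).const_add _

lemma strictMono_Phi : StrictMono Phi :=
  strictMono_of_hasDerivAt_pos hasDerivAt_Phi stdNormalPDF_pos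

lemma continuous_Phi : Continuous Phi :=
  continuous_iff_continuousAt.2 fun u => (hasDerivAt_Phi u).continuousAt

lemma Phi_mem_Ioo (x : ℝ) : Phi x ∈ Set.Ioo (0 : ℝ) 1 :=
  ⟨(strictMono_Phi.monotone.le_of_tendsto tendsto_Phi_atBot (x - 1)).trans_lt
      (strictMono_Phi (sub_one_lt x)),
    (strictMono_Phi (lt_add_one x)).trans_le
      (strictMono_Phi.monotone.ge_of_tendsto tendsto_Phi_atTop _)⟩

lemma Phi_zero : Phi 0 = 1 / 2 := by
  calc Phi 0 = ∫ u in Set.Ioi (-0 : ℝ), stdNormalPDF u := by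
        rw [← integral_comp_neg_Iic]
        simp only [Phi, stdNormalPDF, neg_sq]
    _ = (∫ u in Set.Ioi (0 : ℝ), Real.exp (-(1 / 2) * u ^ 2)) / √(2 * Real.pi) := by
        rw [neg_zero, ← MeasureTheory.integral_div]
        refine MeasureTheory.integral_congr_ae (.of_forall fun u => ?_)
        rw [stdNormalPDF, show -u ^ 2 / 2 = -(1 / 2) * u ^ 2 by ring]
    _ = 1 / 2 := by
        rw [integral_gaussian_Ioi, div_div_eq_mul_div, div_one, mul_comm Real.pi]
        field_simp

/-- The quantile function of the standard normal distribution, with a junk value outside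
`(0, 1)`. -/
def probit : ℝ → ℝ := Function.invFun Phi

lemma probit_Phi (u : ℝ) : probit (Phi u) = u :=
  Function.leftInverse_invFun strictMono_Phi.injective u

lemma Phi_probit {a : ℝ} (ha : a ∈ Set.Ioo (0 : ℝ) 1) : Phi (probit a) = a := by
  obtain ⟨x, hx⟩ := (tendsto_Phi_atBot.eventually_lt_const ha.1).exists
  obtain ⟨y, hy⟩ := (tendsto_Phi_atTop.eventually_const_lt ha.2).exists
  exact Function.invFun_eq
    (mem_range_of_exists_le_of_exists_ge continuous_Phi ⟨x, hx.le⟩ ⟨y, hy.le⟩)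

lemma strictMonoOn_probit : StrictMonoOn probit (Set.Ioo 0 1) := fun a ha b hb hab =>
  strictMono_Phi.lt_iff_lt.1 (by rwa [Phi_probit ha, Phi_probit hb])

lemma continuousAt_probit {a : ℝ} (ha : a ∈ Set.Ioo (0 : ℝ) 1) : ContinuousAt probit a := by
  have h_image : probit '' Set.Ioo 0 1 = Set.univ :=
    Set.eq_univ_of_forall fun u => ⟨Phi u, Phi_mem_Ioo u, probit_Phi u⟩
  exact strictMonoOn_probit.continuousAt_of_image_mem_nhds (Ioo_mem_nhds ha.1 ha.2)
    (h_image ▸ univ_mem)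

lemma hasDerivAt_probit {a : ℝ} (ha : a ∈ Set.Ioo (0 : ℝ) 1) :
    HasDerivAt probit (stdNormalPDF (probit a))⁻¹ a :=
  (hasDerivAt_Phi _).of_local_left_inverse (continuousAt_probit ha) (stdNormalPDF_pos _).ne'
    (eventually_of_mem (Ioo_mem_nhds ha.1 ha.2) fun _ => Phi_probit)

/-- The Gaussian isoperimetric profile `φ ∘ Φ⁻¹` on `(0, 1)`, extended by zero: the Gaussian
surface measure of a half-space of Gaussian measure `a`. -/
def gaussianProfile (a : ℝ) : ℝ :=
  if a ∈ Set.Ioo (0 : ℝ) 1 then stdNormalPDF (probit a) else 0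

lemma gaussianProfile_of_mem {a : ℝ} (ha : a ∈ Set.Ioo (0 : ℝ) 1) :
    gaussianProfile a = stdNormalPDF (probit a) := if_pos ha

lemma gaussianProfile_Phi (u : ℝ) : gaussianProfile (Phi u) = stdNormalPDF u := by
  rw [gaussianProfile_of_mem (Phi_mem_Ioo u), probit_Phi]

lemma gaussianProfile_zero : gaussianProfile 0 = 0 := if_neg fun h => h.1.false

lemma gaussianProfile_one : gaussianProfile 1 = 0 := if_neg fun h => h.2.false

lemma gaussianProfile_nonneg (a : ℝ) : 0 ≤ gaussianProfile a := by
  unfold gaussianProfile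
  split_ifs
  exacts [(stdNormalPDF_pos _).le, le_rfl]

lemma hasDerivAt_gaussianProfile {a : ℝ} (ha : a ∈ Set.Ioo (0 : ℝ) 1) :
    HasDerivAt gaussianProfile (-probit a) a := by
  have h_comp := (hasDerivAt_stdNormalPDF _).comp a (hasDerivAt_probit ha)
  rw [mul_assoc, mul_inv_cancel₀ (stdNormalPDF_pos _).ne', mul_one] at h_comp
  exact h_comp.congr_of_eventuallyEq
    (eventually_of_mem (Ioo_mem_nhds ha.1 ha.2) fun _ => gaussianProfile_of_mem)

lemma continuousAt_gaussianProfile_zero : ContinuousAt gaussianProfile 0 := by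
  rw [ContinuousAt, gaussianProfile_zero]
  refine tendsto_order.2 ⟨fun δ hδ => .of_forall fun a => hδ.trans_le (gaussianProfile_nonneg a),
    fun δ hδ => ?_⟩
  obtain ⟨u, hu⟩ := eventually_atBot.1 (tendsto_stdNormalPDF_atBot.eventually_lt_const hδ)
  filter_upwards [Iio_mem_nhds (Phi_mem_Ioo u).1] with a ha_lt
  by_cases ha : a ∈ Set.Ioo (0 : ℝ) 1
  · rw [gaussianProfile_of_mem ha]
    exact hu _ (strictMono_Phi.le_iff_le.1 ((Phi_probit ha).trans_le ha_lt.le))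
  · rwa [gaussianProfile, if_neg ha]

lemma continuousAt_gaussianProfile_one : ContinuousAt gaussianProfile 1 := by
  rw [ContinuousAt, gaussianProfile_one]
  refine tendsto_order.2 ⟨fun δ hδ => .of_forall fun a => hδ.trans_le (gaussianProfile_nonneg a),
    fun δ hδ => ?_⟩
  obtain ⟨u, hu⟩ := eventually_atTop.1 (tendsto_stdNormalPDF_atTop.eventually_lt_const hδ)
  filter_upwards [Ioi_mem_nhds (Phi_mem_Ioo u).2] with a ha_gt
  by_cases ha : a ∈ Set.Ioo (0 : ℝ) 1
  · rw [gaussianProfile_of_mem ha]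
    exact hu _ (strictMono_Phi.le_iff_le.1 (ha_gt.le.trans_eq (Phi_probit ha).symm))
  · rwa [gaussianProfile, if_neg ha]

lemma continuousOn_gaussianProfile : ContinuousOn gaussianProfile (Set.Icc 0 1) := by
  refine fun a ha => ContinuousAt.continuousWithinAt ?_
  rcases ha.1.eq_or_lt with rfl | h0
  · exact continuousAt_gaussianProfile_zero
  rcases ha.2.eq_or_lt with rfl | h1
  · exact continuousAt_gaussianProfile_one
  exact (hasDerivAt_gaussianProfile ⟨h0, h1⟩).continuousAt

lemma antitoneOn_gaussianProfile : AntitoneOn gaussianProfile (Set.Icc (1 / 2) 1) := by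
  have h_sub : Set.Icc (1 / 2 : ℝ) 1 ⊆ Set.Icc 0 1 := Set.Icc_subset_Icc_left (by norm_num)
  have h_int {a : ℝ} (ha : a ∈ Set.Ioo (1 / 2 : ℝ) 1) : a ∈ Set.Ioo (0 : ℝ) 1 :=
    ⟨one_half_pos.trans ha.1, ha.2⟩
  refine antitoneOn_of_hasDerivWithinAt_nonpos (f' := fun a => -probit a) (convex_Icc _ _)
    (continuousOn_gaussianProfile.mono h_sub) ?_ ?_ <;> rw [interior_Icc] <;> intro a ha
  · exact (hasDerivAt_gaussianProfile (h_int ha)).hasDerivWithinAt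
  · have h_pos : 0 < probit a := by
      rw [← strictMono_Phi.lt_iff_lt, Phi_zero, Phi_probit (h_int ha)]
      exact ha.1
    exact neg_nonpos.2 h_pos.le

/-! ### The two-point inequality -/

/-- The root in the two-point inequality for `gaussianProfile`, with `p` the weight of the upper
point, `β` the value of the profile there, and `d` the distance of the two points. -/
def twoPointRoot (β d p : ℝ) : ℝ := √(β ^ 2 - 2 * Real.log p * d ^ 2)

/-- The upper bound on `gaussianProfile` in the two-point inequality, with `α` the value of the
profile at the lower point; the other parameters are those of `twoPointRoot`. -/
def twoPointBound (α β d p : ℝ) : ℝ := (1 - p) * α + p * twoPointRoot β d p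

lemma twoPointBound_zero (α β d : ℝ) : twoPointBound α β d 0 = α := by
  rw [twoPointBound, sub_zero, one_mul, zero_mul, add_zero]

lemma twoPointBound_one {β : ℝ} (hβ : 0 ≤ β) (α d : ℝ) : twoPointBound α β d 1 = β := by
  rw [twoPointBound, twoPointRoot, sub_self, zero_mul, zero_add, one_mul, Real.log_one, mul_zero,
    zero_mul, sub_zero, Real.sqrt_sq hβ]

lemma continuousOn_twoPointBound (α β d : ℝ) :
    ContinuousOn (twoPointBound α β d) (Set.Icc 0 1) := by
  -- Moving `p` under the root removes the singularity of `log` at `0`.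
  have h_eq : Set.EqOn (twoPointBound α β d)
      (fun p => (1 - p) * α + √(p ^ 2 * β ^ 2 - 2 * p * (p * Real.log p) * d ^ 2))
      (Set.Icc 0 1) := by
    intro p hp
    simp only [twoPointBound, twoPointRoot]
    rw [show p ^ 2 * β ^ 2 - 2 * p * (p * Real.log p) * d ^ 2 =
      p ^ 2 * (β ^ 2 - 2 * Real.log p * d ^ 2) by ring, Real.sqrt_mul (sq_nonneg p),
      Real.sqrt_sq hp.1]
  refine ContinuousOn.congr (Continuous.continuousOn ?_) h_eq
  exact ((continuous_const.sub continuous_id).mul continuous_const).add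
    (((((continuous_pow 2).mul continuous_const).sub
      (((continuous_const.mul continuous_id).mul Real.continuous_mul_log).mul
        continuous_const)).sqrt))

section

variable {d p : ℝ} (α β : ℝ) (hd : d ≠ 0) (hp : p ∈ Set.Ioo (0 : ℝ) 1)
include hd hp

lemma twoPointRoot_radicand_pos : 0 < β ^ 2 - 2 * Real.log p * d ^ 2 := by
  nlinarith [sq_nonneg β, mul_neg_of_neg_of_pos (Real.log_neg hp.1 hp.2) (sq_pos_of_ne_zero hd)]

lemma twoPointRoot_pos : 0 < twoPointRoot β d p :=
  Real.sqrt_pos.2 (twoPointRoot_radicand_pos β hd hp)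

lemma hasDerivAt_twoPointRoot :
    HasDerivAt (twoPointRoot β d) (-(d ^ 2 / (p * twoPointRoot β d p))) p := by
  have h_radicand : HasDerivAt (fun p => β ^ 2 - 2 * Real.log p * d ^ 2)
      (-(2 * p⁻¹ * d ^ 2)) p :=
    (((Real.hasDerivAt_log hp.1.ne').const_mul 2).mul_const (d ^ 2)).const_sub (β ^ 2)
  refine (h_radicand.sqrt (twoPointRoot_radicand_pos β hd hp).ne').congr_deriv ?_
  have := hp.1.ne'
  rw [← twoPointRoot]
  field_simp

lemma hasDerivAt_twoPointBound :
    HasDerivAt (twoPointBound α β d)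
      (-α + twoPointRoot β d p - d ^ 2 / twoPointRoot β d p) p := by
  refine ((((hasDerivAt_id p).const_sub 1).mul_const α).add
    ((hasDerivAt_id p).mul (hasDerivAt_twoPointRoot β hd hp))).congr_deriv ?_
  have := hp.1.ne'
  have := (twoPointRoot_pos β hd hp).ne'
  simp only [id]
  field_simp
  ring

lemma hasDerivAt_deriv_twoPointBound :
    HasDerivAt (deriv (twoPointBound α β d))
      (-(d ^ 2 / (p * twoPointRoot β d p) * (1 + d ^ 2 / twoPointRoot β d p ^ 2))) p := by
  have h_root := hasDerivAt_twoPointRoot β hd hp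
  have h_ne := (twoPointRoot_pos β hd hp).ne'
  refine (((h_root.const_add (-α)).sub ((hasDerivAt_const p (d ^ 2)).div h_root h_ne)).congr_deriv
    ?_).congr_of_eventuallyEq (eventually_of_mem (Ioo_mem_nhds hp.1 hp.2) fun q hq =>
      (hasDerivAt_twoPointBound α β hd hq).deriv)
  have := hp.1.ne'
  field_simp
  ring

end

section

variable {a d p : ℝ} (hp : a + p * d ∈ Set.Ioo (0 : ℝ) 1)
include hp

lemma hasDerivAt_gaussianProfile_line :
    HasDerivAt (fun p => gaussianProfile (a + p * d)) (-probit (a + p * d) * d) p :=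
  HasDerivAt.comp (h₂ := gaussianProfile) (h := fun p => a + p * d) p
    (hasDerivAt_gaussianProfile hp) ((hasDerivAt_mul_const d).const_add a)

lemma hasDerivAt_deriv_gaussianProfile_line :
    HasDerivAt (deriv fun p => gaussianProfile (a + p * d))
      (-(d ^ 2 / gaussianProfile (a + p * d))) p := by
  have h_line : HasDerivAt (fun p => a + p * d) d p := (hasDerivAt_mul_const d).const_add a
  have h_deriv := (((hasDerivAt_probit hp).comp p h_line).neg).mul_const d
  refine (h_deriv.congr_deriv ?_).congr_of_eventuallyEq
    (eventually_of_mem (h_line.continuousAt.preimage_mem_nhds (Ioo_mem_nhds hp.1 hp.2)) fun q hq =>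
      (hasDerivAt_gaussianProfile_line hq).deriv)
  rw [gaussianProfile_of_mem hp]
  ring

end

lemma deriv_deriv_gaussianProfile_line_sub_twoPointBound_pos {α β a d p : ℝ} (hα : 0 ≤ α)
    (hd : d ≠ 0) (hp : p ∈ Set.Ioo (0 : ℝ) 1) (h_mem : a + p * d ∈ Set.Ioo (0 : ℝ) 1)
    (h_pos : 0 < gaussianProfile (a + p * d) - twoPointBound α β d p) :
    0 < deriv (deriv fun p => gaussianProfile (a + p * d) - twoPointBound α β d p) p := by
  have h_root := twoPointRoot_pos β hd hp
  have h_line : ContinuousAt (fun p => a + p * d) p := by fun_prop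
  have h_deriv : (deriv fun p => gaussianProfile (a + p * d) - twoPointBound α β d p) =ᶠ[𝓝 p]
      fun p => deriv (fun p => gaussianProfile (a + p * d)) p - deriv (twoPointBound α β d) p := by
    filter_upwards [Ioo_mem_nhds hp.1 hp.2,
      h_line.preimage_mem_nhds (Ioo_mem_nhds h_mem.1 h_mem.2)] with q hq hq_mem
    exact deriv_fun_sub (hasDerivAt_gaussianProfile_line hq_mem).differentiableAt
      (hasDerivAt_twoPointBound α β hd hq).differentiableAt
  have h_deriv2 := ((hasDerivAt_deriv_gaussianProfile_line h_mem).sub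
    (hasDerivAt_deriv_twoPointBound α β hd hp)).congr_of_eventuallyEq h_deriv
  have h_pR_pos : 0 < p * twoPointRoot β d p := mul_pos hp.1 h_root
  have h_pR_lt : p * twoPointRoot β d p < gaussianProfile (a + p * d) := by
    unfold twoPointBound at h_pos
    linarith [mul_nonneg (sub_nonneg.2 hp.2.le) hα]
  have h_curvature : d ^ 2 / gaussianProfile (a + p * d) < d ^ 2 / (p * twoPointRoot β d p) :=
    div_lt_div_of_pos_left (by positivity) h_pR_pos h_pR_lt
  have h_extra : 0 ≤ d ^ 2 / (p * twoPointRoot β d p) * (d ^ 2 / twoPointRoot β d p ^ 2) := by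
    positivity
  rw [h_deriv2.deriv]
  linarith

-- On the segment `[a, b]` the profile solves `I'' = -d² / I` while the bound `R` satisfies
-- `R'' ≤ -d² / R`, and they agree at the endpoints; so `I - R` is convex wherever it is positive.
lemma gaussianProfile_two_point {a b p : ℝ} (ha : 0 ≤ a) (hab : a ≤ b) (hb : b ≤ 1)
    (hp : p ∈ Set.Icc (0 : ℝ) 1) :
    gaussianProfile (a + p * (b - a)) ≤
      twoPointBound (gaussianProfile a) (gaussianProfile b) (b - a) p := by
  rcases hab.eq_or_lt with rfl | hlt
  · rw [twoPointBound, twoPointRoot, sub_self, mul_zero, zero_pow two_ne_zero, mul_zero, sub_zero,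
      Real.sqrt_sq (gaussianProfile_nonneg a), add_zero]
    linarith
  have hd : 0 < b - a := sub_pos.2 hlt
  have h_mem {q : ℝ} (hq : q ∈ Set.Ioo (0 : ℝ) 1) : a + q * (b - a) ∈ Set.Ioo (0 : ℝ) 1 :=
    ⟨by nlinarith [hq.1], by nlinarith [hq.2]⟩
  have h_maps : Set.MapsTo (fun q => a + q * (b - a)) (Set.Icc 0 1) (Set.Icc 0 1) := fun q hq =>
    ⟨by nlinarith [hq.1], by nlinarith [hq.2]⟩
  have h_nonpos := nonpos_of_deriv_deriv_pos_of_pos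
    (g := fun q => gaussianProfile (a + q * (b - a)) -
      twoPointBound (gaussianProfile a) (gaussianProfile b) (b - a) q)
    ((continuousOn_gaussianProfile.comp (by fun_prop) h_maps).sub
      (continuousOn_twoPointBound _ _ _)) ?_ ?_ ?_ p hp
  · exact sub_nonpos.1 h_nonpos
  · rw [zero_mul, add_zero, twoPointBound_zero, sub_self]
  · rw [one_mul, add_sub_cancel, twoPointBound_one (gaussianProfile_nonneg b), sub_self]
  · exact fun q hq h_pos => deriv_deriv_gaussianProfile_line_sub_twoPointBound_pos
      (gaussianProfile_nonneg a) hd.ne' hq (h_mem hq) h_pos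

/-! ### Increasing sets of erasure patterns -/

lemma wH_le {n : ℕ} (x : Pattern n) : wH x ≤ n :=
  hammingNorm_le_card_fintype.trans_eq (Fintype.card_fin n)

lemma wH_cons_zero {n : ℕ} (x : Pattern n) : wH (Fin.cons 0 x : Pattern (n + 1)) = wH x := by
  simp only [wH, hammingNorm, Fin.card_filter_univ_succ, Fin.cons_zero, ne_eq, not_true,
    if_false, Fin.cons_succ]

lemma wH_cons_one {n : ℕ} (x : Pattern n) : wH (Fin.cons 1 x : Pattern (n + 1)) = wH x + 1 := by
  simp only [wH, hammingNorm, Fin.card_filter_univ_succ, Fin.cons_zero, ne_eq, one_ne_zero,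
    not_false_eq_true, if_true, Fin.cons_succ]

lemma sum_pattern_succ {M : Type*} [AddCommMonoid M] {n : ℕ} (f : Pattern (n + 1) → M) :
    ∑ ω, f ω = ∑ x, f (Fin.cons 1 x) + ∑ x, f (Fin.cons 0 x) := by
  rw [← (Fin.consEquiv fun _ => ZMod 2).sum_comp, Fintype.sum_prod_type]
  exact (Fin.sum_univ_two _).trans (add_comm _ _)

/-- Expectation with respect to the product Bernoulli(ε) measure on erasure patterns. -/
def erasureExp {n : ℕ} (ε : ℝ) : (Pattern n → ℝ) →ₗ[ℝ] ℝ :=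
  ∑ ω, (ε ^ wH ω * (1 - ε) ^ (n - wH ω)) • LinearMap.proj ω

lemma erasureExp_apply {n : ℕ} (ε : ℝ) (f : Pattern n → ℝ) :
    erasureExp ε f = ∑ ω, ε ^ wH ω * (1 - ε) ^ (n - wH ω) * f ω := by
  simp only [erasureExp, LinearMap.sum_apply, LinearMap.smul_apply, LinearMap.proj_apply,
    smul_eq_mul]

lemma erasureExp_fin_zero (ε : ℝ) (f : Pattern 0 → ℝ) : erasureExp ε f = f default := by
  rw [erasureExp_apply, Fintype.sum_unique, Nat.le_zero.1 (wH_le _), pow_zero, pow_zero, one_mul,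
    one_mul]
  exact congr_arg f (Subsingleton.elim _ _)

lemma erasureExp_succ {n : ℕ} (ε : ℝ) (f : Pattern (n + 1) → ℝ) :
    erasureExp ε f =
      ε * erasureExp ε (fun x => f (Fin.cons 1 x)) +
        (1 - ε) * erasureExp ε (fun x => f (Fin.cons 0 x)) := by
  simp only [erasureExp_apply, sum_pattern_succ, mul_sum]
  congr 1 <;> refine sum_congr rfl fun x _ => ?_
  · rw [wH_cons_one, Nat.add_sub_add_right]
    ring
  · rw [wH_cons_zero, Nat.sub_add_comm (wH_le x)]
    ring

lemma erasureExp_one {n : ℕ} (ε : ℝ) : erasureExp ε (1 : Pattern n → ℝ) = 1 := by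
  induction n with
  | zero => rw [erasureExp_fin_zero, Pi.one_apply]
  | succ n ih =>
    rw [erasureExp_succ]
    exact (congr_arg₂ (fun a b => ε * a + (1 - ε) * b) ih ih).trans (by ring)

section

variable {n : ℕ} {ε : ℝ} (hε : ε ∈ Set.Icc (0 : ℝ) 1)
include hε

lemma bernoulli_weight_nonneg (k l : ℕ) : 0 ≤ ε ^ k * (1 - ε) ^ l :=
  mul_nonneg (pow_nonneg hε.1 _) (pow_nonneg (sub_nonneg.2 hε.2) _)

lemma erasureExp_mono : Monotone (erasureExp ε : (Pattern n → ℝ) → ℝ) := by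
  intro f g hfg
  rw [erasureExp_apply, erasureExp_apply]
  exact sum_le_sum fun ω _ => mul_le_mul_of_nonneg_left (hfg ω) (bernoulli_weight_nonneg hε _ _)

lemma erasureExp_nonneg {f : Pattern n → ℝ} (hf : 0 ≤ f) : 0 ≤ erasureExp ε f :=
  (map_zero _).symm.trans_le (erasureExp_mono hε hf)

-- Minkowski's inequality: the triangle inequality for the complex-valued function `u + v i`.
lemma sqrt_sq_erasureExp_add_sq_le (u v : Pattern n → ℝ) :
    √(erasureExp ε u ^ 2 + erasureExp ε v ^ 2) ≤ erasureExp ε fun ω => √(u ω ^ 2 + v ω ^ 2) := by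
  simp only [← Complex.norm_add_mul_I, erasureExp_apply]
  push_cast
  rw [sum_mul, ← sum_add_distrib]
  refine (norm_sum_le _ _).trans_eq (sum_congr rfl fun ω _ => ?_)
  rw [← Real.norm_of_nonneg (bernoulli_weight_nonneg hε (wH ω) (n - wH ω)),
    ← Complex.norm_real, ← norm_mul]
  push_cast
  ring_nf

end

/-- Probability of a set of erasure patterns under the product Bernoulli(ε) measure: `muE` for a
`Set` instead of a `Finset`. -/
def erasureProb {n : ℕ} (ε : ℝ) (S : Set (Pattern n)) : ℝ := erasureExp ε (S.indicator 1)

lemma muE_eq_erasureProb {n : ℕ} (ε : ℝ) (S : Finset (Pattern n)) :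
    muE ε S = erasureProb ε (S : Set (Pattern n)) := by
  simp only [muE, erasureProb, erasureExp_apply, Set.indicator_apply, mem_coe, Pi.one_apply,
    mul_ite, mul_one, mul_zero, sum_ite_mem, univ_inter]

section

variable {n : ℕ} {ε : ℝ} (hε : ε ∈ Set.Icc (0 : ℝ) 1)
include hε

lemma erasureProb_nonneg (S : Set (Pattern n)) : 0 ≤ erasureProb ε S :=
  erasureExp_nonneg hε (Set.indicator_nonneg fun _ _ => zero_le_one)

lemma erasureProb_mono {S T : Set (Pattern n)} (h : S ⊆ T) : erasureProb ε S ≤ erasureProb ε T :=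
  erasureExp_mono hε (Set.indicator_le_indicator_of_subset h fun _ => zero_le_one)

lemma erasureProb_le_one (S : Set (Pattern n)) : erasureProb ε S ≤ 1 :=
  (erasureExp_mono hε (Set.indicator_le_self' fun _ _ => zero_le_one)).trans_eq (erasureExp_one ε)

end

lemma erasureProb_empty {n : ℕ} (ε : ℝ) : erasureProb ε (∅ : Set (Pattern n)) = 0 := by
  rw [erasureProb, Set.indicator_empty, ← Pi.zero_def, map_zero]

lemma erasureProb_sdiff {n : ℕ} {S T : Set (Pattern n)} (ε : ℝ) (h : S ⊆ T) :
    erasureProb ε (T \ S) = erasureProb ε T - erasureProb ε S := by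
  rw [erasureProb, Set.indicator_sdiff h, map_sub]
  rfl

/-- The section of a set of patterns at the value `b` of the first coordinate, the variable of the
inductions on the length. -/
def headSlice {n : ℕ} (S : Set (Pattern (n + 1))) (b : ZMod 2) : Set (Pattern n) :=
  {x | (Fin.cons b x : Pattern (n + 1)) ∈ S}

lemma mem_headSlice {n : ℕ} {S : Set (Pattern (n + 1))} {b : ZMod 2} {x : Pattern n} :
    x ∈ headSlice S b ↔ (Fin.cons b x : Pattern (n + 1)) ∈ S := Iff.rfl

lemma erasureProb_succ {n : ℕ} (ε : ℝ) (S : Set (Pattern (n + 1))) :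
    erasureProb ε S = ε * erasureProb ε (headSlice S 1) + (1 - ε) * erasureProb ε (headSlice S 0) :=
  erasureExp_succ ε _

/-- A set of erasure patterns is increasing if adding erasures does not leave it. -/
def IsIncreasing {n : ℕ} (S : Set (Pattern n)) : Prop :=
  ∀ ⦃ω ω' : Pattern n⦄, covers ω' ω → ω ∈ S → ω' ∈ S

lemma isIncreasing_headSlice {n : ℕ} {S : Set (Pattern (n + 1))}
    (hS : IsIncreasing S) (b : ZMod 2) : IsIncreasing (headSlice S b) := fun _ _ h hω =>
  hS (Fin.cases id h) hω

lemma headSlice_zero_subset_headSlice_one {n : ℕ} {S : Set (Pattern (n + 1))}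
    (hS : IsIncreasing S) :
    headSlice S 0 ⊆ headSlice S 1 := fun _ hω =>
  hS (Fin.cases (fun _ => one_ne_zero) fun _ => id) hω

/-- The pivotal coordinates of `ω ∈ S`: the erasures whose removal takes `ω` out of `S`. For
`ω ∉ S` the set is empty, so its expected size counts boundary edges from inside `S`. -/
def pivotalSet {n : ℕ} (S : Set (Pattern n)) (ω : Pattern n) : Finset (Fin n) :=
  {i | ω ∈ S ∧ Function.update ω i 0 ∉ S}

lemma mem_pivotalSet {n : ℕ} {S : Set (Pattern n)} {ω : Pattern n} {i : Fin n} :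
    i ∈ pivotalSet S ω ↔ ω ∈ S ∧ Function.update ω i 0 ∉ S := mem_filter_univ _

lemma card_pivotalSet_cons_zero {n : ℕ} (S : Set (Pattern (n + 1))) (x : Pattern n) :
    #(pivotalSet S (Fin.cons 0 x)) = #(pivotalSet (headSlice S 0) x) := by
  simp only [pivotalSet, Fin.card_filter_univ_succ, Fin.update_cons_zero, and_not_self, if_false,
    ← Fin.cons_update]
  rfl

lemma card_pivotalSet_cons_one {n : ℕ} (S : Set (Pattern (n + 1))) (x : Pattern n) :
    (#(pivotalSet S (Fin.cons 1 x)) : ℝ) =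
      #(pivotalSet (headSlice S 1) x) + (headSlice S 1 \ headSlice S 0).indicator 1 x := by
  simp only [pivotalSet, Fin.card_filter_univ_succ, Fin.update_cons_zero,
    ← Fin.cons_update, Set.indicator_apply, Set.mem_sdiff, mem_headSlice]
  split_ifs <;> simp

lemma erasureProb_fin_zero (ε : ℝ) (S : Set (Pattern 0)) :
    erasureProb ε S = 0 ∨ erasureProb ε S = 1 := by
  rw [erasureProb, erasureExp_fin_zero]
  exact Set.indicator_eq_zero_or_self _ _ _

lemma IsIncreasing.sqrt_sq_add_sq_le_erasureExp_cons_one {n : ℕ} {S : Set (Pattern (n + 1))}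
    (hS : IsIncreasing S) {ε : ℝ} (hε : ε ∈ Set.Icc (0 : ℝ) 1) :
    √((erasureExp ε fun x => √(#(pivotalSet (headSlice S 1) x))) ^ 2 +
        (erasureProb ε (headSlice S 1) - erasureProb ε (headSlice S 0)) ^ 2) ≤
      erasureExp ε fun x => √(#(pivotalSet S (Fin.cons 1 x))) := by
  rw [← erasureProb_sdiff ε (headSlice_zero_subset_headSlice_one hS)]
  refine (sqrt_sq_erasureExp_add_sq_le hε _ _).trans_eq (congr_arg _ (funext fun x => ?_))
  rw [Real.sq_sqrt (Nat.cast_nonneg _), card_pivotalSet_cons_one, Set.indicator_apply]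
  split_ifs
  · rw [Pi.one_apply, one_pow]
  · rw [zero_pow two_ne_zero]

lemma IsIncreasing.twoPointRoot_le_erasureExp_cons_one {n : ℕ} {S : Set (Pattern (n + 1))}
    (hS : IsIncreasing S) {ε : ℝ} (hε : ε ∈ Set.Ioo (0 : ℝ) 1)
    (h_slice : gaussianProfile (erasureProb ε (headSlice S 1)) ≤
      √(-2 * Real.log ε) * erasureExp ε fun x => √(#(pivotalSet (headSlice S 1) x))) :
    twoPointRoot (gaussianProfile (erasureProb ε (headSlice S 1)))
        (erasureProb ε (headSlice S 1) - erasureProb ε (headSlice S 0)) ε ≤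
      √(-2 * Real.log ε) * erasureExp ε fun x => √(#(pivotalSet S (Fin.cons 1 x))) := by
  have h_log : 0 ≤ -2 * Real.log ε := by linarith [Real.log_neg hε.1 hε.2]
  have h_sq := pow_le_pow_left₀ (gaussianProfile_nonneg _) h_slice 2
  rw [mul_pow, Real.sq_sqrt h_log] at h_sq
  refine le_trans ?_ (mul_le_mul_of_nonneg_left
    (hS.sqrt_sq_add_sq_le_erasureExp_cons_one (Set.Ioo_subset_Icc_self hε)) (Real.sqrt_nonneg _))
  rw [← Real.sqrt_mul h_log]
  exact Real.sqrt_le_sqrt (by linarith)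

theorem IsIncreasing.gaussianProfile_erasureProb_le {n : ℕ} {S : Set (Pattern n)}
    (hS : IsIncreasing S) {ε : ℝ} (hε : ε ∈ Set.Ioo (0 : ℝ) 1) :
    gaussianProfile (erasureProb ε S) ≤
      √(-2 * Real.log ε) * erasureExp ε fun ω => √(#(pivotalSet S ω)) := by
  have hε' := Set.Ioo_subset_Icc_self hε
  induction n with
  | zero =>
    have h_nonneg : 0 ≤ erasureExp ε fun ω => √(#(pivotalSet S ω)) :=
      erasureExp_nonneg hε' fun _ => Real.sqrt_nonneg _
    rcases erasureProb_fin_zero ε S with h | h <;> rw [h]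
    · exact gaussianProfile_zero.trans_le (mul_nonneg (Real.sqrt_nonneg _) h_nonneg)
    · exact gaussianProfile_one.trans_le (mul_nonneg (Real.sqrt_nonneg _) h_nonneg)
  | succ n ih =>
    have h_slices := headSlice_zero_subset_headSlice_one hS
    set c := √(-2 * Real.log ε)
    set a := erasureProb ε (headSlice S 0)
    set b := erasureProb ε (headSlice S 1)
    calc gaussianProfile (erasureProb ε S) = gaussianProfile (a + ε * (b - a)) := by
          rw [erasureProb_succ]
          congr 1
          ring
      _ ≤ (1 - ε) * gaussianProfile a + ε * twoPointRoot (gaussianProfile b) (b - a) ε :=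
          gaussianProfile_two_point (erasureProb_nonneg hε' _) (erasureProb_mono hε' h_slices)
            (erasureProb_le_one hε' _) hε'
      _ ≤ (1 - ε) * (c * erasureExp ε fun x => √(#(pivotalSet (headSlice S 0) x))) +
            ε * (c * erasureExp ε fun x => √(#(pivotalSet S (Fin.cons 1 x)))) := by
          gcongr
          · exact sub_nonneg.2 hε.2.le
          · exact ih (isIncreasing_headSlice hS 0)
          · exact hε.1.le
          · exact hS.twoPointRoot_le_erasureExp_cons_one hε (ih (isIncreasing_headSlice hS 1))
      _ = c * erasureExp ε fun ω => √(#(pivotalSet S ω)) := by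
          simp only [erasureExp_succ, card_pivotalSet_cons_zero]
          ring

-- Russo's formula; the factor `1 / ε` is there because `pivotalSet` contains only erased positions.
theorem IsIncreasing.hasDerivAt_erasureProb {n : ℕ} {S : Set (Pattern n)} (hS : IsIncreasing S)
    {ε : ℝ} (hε : ε ≠ 0) :
    HasDerivAt (fun t => erasureProb t S) (erasureExp ε (fun ω => (#(pivotalSet S ω) : ℝ)) / ε)
      ε := by
  induction n with
  | zero =>
    simp only [erasureProb, erasureExp_fin_zero, pivotalSet, univ_eq_empty, filter_empty,
      card_empty, Nat.cast_zero, zero_div]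
    exact hasDerivAt_const _ _
  | succ n ih =>
    simp only [erasureProb_succ]
    refine (((hasDerivAt_id ε).mul (ih (isIncreasing_headSlice hS 1))).add
      (((hasDerivAt_id ε).const_sub 1).mul (ih (isIncreasing_headSlice hS 0)))).congr_deriv ?_
    have h_cons_one : (erasureExp ε fun x => (#(pivotalSet S (Fin.cons 1 x)) : ℝ)) =
        (erasureExp ε fun x => (#(pivotalSet (headSlice S 1) x) : ℝ)) +
          (erasureProb ε (headSlice S 1) - erasureProb ε (headSlice S 0)) := by
      rw [← erasureProb_sdiff ε (headSlice_zero_subset_headSlice_one hS), erasureProb, ← map_add]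
      simp only [card_pivotalSet_cons_one]
      rfl
    rw [erasureExp_succ, h_cons_one]
    simp only [card_pivotalSet_cons_zero, id]
    field_simp
    ring

lemma IsIncreasing.monotoneOn_erasureProb {n : ℕ} {S : Set (Pattern n)} (hS : IsIncreasing S) :
    MonotoneOn (fun t => erasureProb t S) (Set.Ioc 0 1) := by
  refine monotoneOn_of_hasDerivWithinAt_nonneg (convex_Ioc 0 1)
    (fun t ht => (hS.hasDerivAt_erasureProb ht.1.ne').continuousAt.continuousWithinAt)
    (fun t ht => (hS.hasDerivAt_erasureProb (interior_subset ht).1.ne').hasDerivWithinAt)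
    fun t ht => ?_
  have ht' := interior_subset ht
  exact div_nonneg (erasureExp_nonneg ⟨ht'.1.le, ht'.2⟩ fun _ => Nat.cast_nonneg _) ht'.1.le

lemma covers_cons_zero {n : ℕ} {b : ZMod 2} {ω x : Pattern n} :
    covers (Fin.cons b ω : Pattern (n + 1)) (Fin.cons 0 x) ↔ covers ω x := by
  simp only [covers, Fin.forall_fin_succ, Fin.cons_zero, Fin.cons_succ, ne_eq, not_true,
    false_imp_iff, true_and]

lemma covers_cons_one {n : ℕ} {b : ZMod 2} {ω x : Pattern n} :
    covers (Fin.cons b ω : Pattern (n + 1)) (Fin.cons 1 x) ↔ b ≠ 0 ∧ covers ω x := by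
  simp only [covers, Fin.forall_fin_succ, Fin.cons_zero, Fin.cons_succ, ne_eq, one_ne_zero,
    not_false_eq_true, true_imp_iff]

lemma erasureProb_covers {n : ℕ} (ε : ℝ) (x : Pattern n) :
    erasureProb ε {ω | covers ω x} = ε ^ wH x := by
  induction n with
  | zero =>
    rw [erasureProb, erasureExp_fin_zero, Nat.le_zero.1 (wH_le x), pow_zero]
    exact Set.indicator_of_mem (fun i => i.elim0) _
  | succ n ih =>
    obtain ⟨b, x, rfl⟩ : ∃ b y, x = Fin.cons b y := ⟨x 0, Fin.tail x, (Fin.cons_self_tail x).symm⟩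
    rw [erasureProb_succ]
    obtain rfl | rfl : b = 0 ∨ b = 1 := by revert b; decide
    · simp only [headSlice, Set.mem_ofPred_eq, covers_cons_zero, ih, wH_cons_zero]
      ring
    · simp only [headSlice, Set.mem_ofPred_eq, covers_cons_one, ih, wH_cons_one, ne_eq, one_ne_zero,
        not_true, not_false_eq_true, true_and, false_and, Set.ofPred_false, erasureProb_empty]
      ring

/-! ### The MAP error event -/

section Code

variable {n : ℕ} (C : Submodule (ZMod 2) (Pattern n)) (W : ℕ) {ω : Pattern n}

lemma covers_update_zero {x : Pattern n} {i : Fin n} :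
    covers (Function.update ω i 0) x ↔ covers ω x ∧ x i = 0 := by
  constructor
  · intro h
    have hi : x i = 0 := by_contra fun hxi => h i hxi (Function.update_self i 0 ω)
    refine ⟨fun j hj => ?_, hi⟩
    have hji : j ≠ i := fun hji => hj (hji ▸ hi)
    exact Function.update_of_ne hji 0 ω ▸ h j hj
  · rintro ⟨h, hi⟩ j hj
    have hji : j ≠ i := fun hji => hj (hji ▸ hi)
    exact (Function.update_of_ne hji 0 ω).symm ▸ h j hj

/-- The event of a block-MAP error, `Ω` in the paper: `errBEC` as a `Set`. -/
def errorEvent : Set (Pattern n) := errBEC C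

variable {C} in
lemma mem_errorEvent : ω ∈ errorEvent C ↔ ∃ x ∈ C, x ≠ 0 ∧ covers ω x := mem_filter_univ _

lemma isIncreasing_errorEvent : IsIncreasing (errorEvent C) := by
  intro ω ω' h hω
  obtain ⟨x, hxC, hx, hωx⟩ := mem_errorEvent.1 hω
  exact mem_errorEvent.2 ⟨x, hxC, hx, fun i hi => h i (hωx i hi)⟩

lemma Pmap_eq_erasureProb : Pmap C = fun ε => erasureProb ε (errorEvent C) :=
  funext fun ε => muE_eq_erasureProb ε _

lemma hasDerivAt_Pmap {ε : ℝ} (hε : ε ≠ 0) :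
    HasDerivAt (Pmap C) (erasureExp ε (fun ω => (#(pivotalSet (errorEvent C) ω) : ℝ)) / ε) ε := by
  rw [Pmap_eq_erasureProb]
  exact (isIncreasing_errorEvent C).hasDerivAt_erasureProb hε

lemma monotoneOn_Pmap : MonotoneOn (Pmap C) (Set.Ioc 0 1) := by
  rw [Pmap_eq_erasureProb]
  exact (isIncreasing_errorEvent C).monotoneOn_erasureProb

variable {C}

lemma apply_ne_zero_of_update_notMem_errorEvent {x : Pattern n} {i : Fin n}
    (hi : Function.update ω i 0 ∉ errorEvent C) (hxC : x ∈ C) (hx : x ≠ 0) (hωx : covers ω x) :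
    x i ≠ 0 := fun hxi =>
  hi (mem_errorEvent.2 ⟨x, hxC, hx, covers_update_zero.2 ⟨hωx, hxi⟩⟩)

-- Two distinct nonzero codewords covered by `ω` would both be nonzero at a pivotal coordinate, so
-- their sum would survive its removal.
lemma eq_of_update_notMem_errorEvent {x y : Pattern n} {i : Fin n}
    (hi : Function.update ω i 0 ∉ errorEvent C) (hxC : x ∈ C) (hx : x ≠ 0) (hωx : covers ω x)
    (hyC : y ∈ C) (hy : y ≠ 0) (hωy : covers ω y) : y = x := by
  by_contra hyx
  have h_covers : covers ω (y - x) := fun j hj => by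
    by_cases hxj : x j = 0
    · exact hωy j fun hyj => hj (by rw [Pi.sub_apply, hxj, hyj, sub_zero])
    · exact hωx j hxj
  refine apply_ne_zero_of_update_notMem_errorEvent hi (C.sub_mem hyC hxC) (sub_ne_zero.2 hyx)
    h_covers ?_
  have h_one {a b : ZMod 2} (ha : a ≠ 0) (hb : b ≠ 0) : a - b = 0 := by revert a b; decide
  exact h_one (apply_ne_zero_of_update_notMem_errorEvent hi hyC hy hωy)
    (apply_ne_zero_of_update_notMem_errorEvent hi hxC hx hωx)

lemma exists_wH_eq_card_pivotalSet (h : (pivotalSet (errorEvent C) ω).Nonempty) :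
    ∃ x ∈ C, covers ω x ∧ wH x = #(pivotalSet (errorEvent C) ω) := by
  obtain ⟨i, hi_mem⟩ := h
  obtain ⟨hω, hi⟩ := mem_pivotalSet.1 hi_mem
  obtain ⟨x, hxC, hx, hωx⟩ := mem_errorEvent.1 hω
  have h_support : ({j | x j ≠ 0} : Finset (Fin n)) = pivotalSet (errorEvent C) ω := by
    ext j
    rw [mem_filter_univ, mem_pivotalSet]
    refine ⟨fun hxj => ⟨hω, fun hj => ?_⟩, fun hj =>
      apply_ne_zero_of_update_notMem_errorEvent hj.2 hxC hx hωx⟩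
    obtain ⟨y, hyC, hy, hωy'⟩ := mem_errorEvent.1 hj
    obtain ⟨hωy, hyj⟩ := covers_update_zero.1 hωy'
    exact hxj (eq_of_update_notMem_errorEvent hi hxC hx hωx hyC hy hωy ▸ hyj)
  exact ⟨x, hxC, hωx, by rw [wH, hammingNorm, ← h_support]⟩

variable (C)

/-- The codewords counted by `AW C W`: those of weight between `1` and `W`. -/
def lowWeightCodewords : Finset (Pattern n) := {x | x ∈ C ∧ wH x ∈ Icc 1 W}

lemma sum_lowWeightCodewords (f : ℕ → ℝ) :
    ∑ x ∈ lowWeightCodewords C W, f (wH x) = ∑ w ∈ Icc 1 W, Aw C w * f w := by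
  rw [← sum_fiberwise_of_maps_to (g := wH) (t := Icc 1 W) fun x hx => ((mem_filter_univ x).1 hx).2]
  refine sum_congr rfl fun w hw => ?_
  have h_fiber : {x ∈ lowWeightCodewords C W | wH x = w} =
      ({x | x ∈ C ∧ wH x = w} : Finset (Pattern n)) := by
    ext x
    simp only [lowWeightCodewords, mem_filter, mem_univ, true_and]
    exact ⟨fun h => ⟨h.1.1, h.2⟩, fun h => ⟨⟨h.1, h.2 ▸ hw⟩, h.2⟩⟩
  rw [h_fiber, sum_congr rfl fun x hx => by rw [((mem_filter_univ x).1 hx).2], sum_const,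
    nsmul_eq_mul, Aw]

lemma sqrt_mul_sqrt_card_pivotalSet_le (ω : Pattern n) :
    √W * √(#(pivotalSet (errorEvent C) ω)) ≤
      #(pivotalSet (errorEvent C) ω) +
        √W * ∑ x ∈ lowWeightCodewords C W, √(wH x) * {ω | covers ω x}.indicator 1 ω := by
  set h := #(pivotalSet (errorEvent C) ω)
  have h_term (x : Pattern n) : 0 ≤ √(wH x) * ({ω | covers ω x}.indicator 1 ω : ℝ) :=
    mul_nonneg (Real.sqrt_nonneg _) (Set.indicator_nonneg (fun _ _ => zero_le_one) _)
  have h_sum : 0 ≤ √W * ∑ x ∈ lowWeightCodewords C W, √(wH x) * {ω | covers ω x}.indicator 1 ω :=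
    mul_nonneg (Real.sqrt_nonneg _) (sum_nonneg fun x _ => h_term x)
  rcases Nat.eq_zero_or_pos h with hh | hh
  · rw [hh, Nat.cast_zero, Real.sqrt_zero, mul_zero, zero_add]
    exact h_sum
  rcases lt_or_ge W h with hW | hW
  · calc √W * √h ≤ √h * √h := by gcongr
      _ = h := Real.mul_self_sqrt h.cast_nonneg
      _ ≤ _ := le_add_of_nonneg_right h_sum
  · obtain ⟨x, hxC, hωx, hx⟩ := exists_wH_eq_card_pivotalSet (card_pos.1 hh)
    have hx_low : x ∈ lowWeightCodewords C W :=
      (mem_filter_univ x).2 ⟨hxC, mem_Icc.2 (hx ▸ ⟨hh, hW⟩)⟩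
    have h_single := single_le_sum (fun y _ => h_term y) hx_low
    rw [Set.indicator_of_mem (by exact hωx), Pi.one_apply, mul_one, hx] at h_single
    exact (mul_le_mul_of_nonneg_left h_single (Real.sqrt_nonneg _)).trans
      (le_add_of_nonneg_left h.cast_nonneg)

lemma sqrt_mul_erasureExp_sqrt_card_pivotalSet_le {ε : ℝ} (hε : ε ∈ Set.Icc (0 : ℝ) 1) :
    √W * erasureExp ε (fun ω => √(#(pivotalSet (errorEvent C) ω))) ≤
      erasureExp ε (fun ω => (#(pivotalSet (errorEvent C) ω) : ℝ)) +
        √W * ∑ w ∈ Icc 1 W, Aw C w * (√w * ε ^ w) := by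
  rw [← sum_lowWeightCodewords C W fun w => √w * ε ^ w, ← smul_eq_mul, ← map_smul]
  refine (erasureExp_mono hε (sqrt_mul_sqrt_card_pivotalSet_le C W)).trans_eq ?_
  have h_split : (fun ω => (#(pivotalSet (errorEvent C) ω) : ℝ) +
        √W * ∑ x ∈ lowWeightCodewords C W, √(wH x) * {ω | covers ω x}.indicator 1 ω) =
      (fun ω => (#(pivotalSet (errorEvent C) ω) : ℝ)) +
        √W • ∑ x ∈ lowWeightCodewords C W, √(wH x) • {ω | covers ω x}.indicator 1 := by
    funext ω
    simp only [Pi.add_apply, Pi.smul_apply, Finset.sum_apply, smul_eq_mul]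
  rw [h_split, map_add, map_smul, map_sum, smul_eq_mul]
  simp only [map_smul, smul_eq_mul]
  congr! 4 with x
  exact erasureProb_covers ε x

lemma AW_nonneg {z : ℝ} (hz : 0 ≤ z) : 0 ≤ AW C W z :=
  sum_nonneg fun _ _ => mul_nonneg (Nat.cast_nonneg _) (pow_nonneg hz _)

/-- The antiderivative in `t`, vanishing at `s`, of the contribution of the low-weight codewords to
the differential inequality for `Pmap C`. -/
def weightLoss (s t : ℝ) : ℝ := ∑ w ∈ Icc 1 W, Aw C w * (√W / √w * (t ^ w - s ^ w))

lemma weightLoss_self (s : ℝ) : weightLoss C W s s = 0 := by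
  simp only [weightLoss, sub_self, mul_zero, sum_const_zero]

lemma weightLoss_nonneg {s t : ℝ} (hs : 0 ≤ s) (hst : s ≤ t) : 0 ≤ weightLoss C W s t :=
  sum_nonneg fun w _ => mul_nonneg (Nat.cast_nonneg _)
    (mul_nonneg (by positivity) (sub_nonneg.2 (pow_le_pow_left₀ hs hst w)))

lemma hasDerivAt_weightLoss (s : ℝ) {t : ℝ} (ht : t ≠ 0) :
    HasDerivAt (weightLoss C W s) (√W * (∑ w ∈ Icc 1 W, Aw C w * (√w * t ^ w)) / t) t := by
  rw [mul_sum, sum_div]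
  refine HasDerivAt.fun_sum fun w hw => ((((hasDerivAt_pow w t).sub_const (s ^ w)).const_mul
    (√W / √w)).const_mul (Aw C w : ℝ)).congr_deriv ?_
  have hw : w ≠ 0 := Nat.one_le_iff_ne_zero.1 (mem_Icc.1 hw).1
  rw [eq_div_iff ht]
  calc Aw C w * (√W / √w * (w * t ^ (w - 1))) * t
      = √W * (Aw C w * (w / √w * (t ^ (w - 1) * t))) := by ring
    _ = √W * (Aw C w * (√w * t ^ w)) := by rw [Real.div_sqrt, pow_sub_one_mul hw]

end Code

lemma weightLoss_le {n : ℕ} (C : Submodule (ZMod 2) (Pattern n)) (W : ℕ) {s t : ℝ} (hs : 0 < s)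
    (hst : s ≤ t) (ht : t ≤ 1) :
    weightLoss C W s t ≤ √(-Real.log s) * √W * AW C W t := by
  rw [weightLoss, AW, mul_sum]
  refine sum_le_sum fun w hw => ?_
  have hw : (√w : ℝ) ≠ 0 := (Real.sqrt_pos.2 (Nat.cast_pos.2 (mem_Icc.1 hw).1)).ne'
  calc Aw C w * (√W / √w * (t ^ w - s ^ w))
      ≤ Aw C w * (√W / √w * (√(-Real.log s) * √w * t ^ w)) := by
        gcongr
        exact pow_sub_pow_le hs hst ht w
    _ = √(-Real.log s) * √W * (Aw C w * t ^ w) := by field_simp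

lemma hasDerivAt_Phi_mul_sub_sqrt_neg_log (k c : ℝ) {t : ℝ} (ht : t ∈ Set.Ioo (0 : ℝ) 1) :
    HasDerivAt (fun t => Phi (k * (c - √(-Real.log t))))
      (stdNormalPDF (k * (c - √(-Real.log t))) * (k / (2 * √(-Real.log t))) / t) t := by
  refine ((hasDerivAt_Phi _).comp t
    (((hasDerivAt_sqrt_neg_log ht).const_sub c).const_mul k)).congr_deriv ?_
  ring

lemma stdNormalPDF_mul_le {n : ℕ} (C : Submodule (ZMod 2) (Pattern n)) (W : ℕ) {t z : ℝ}
    (ht : t ∈ Set.Ioo (0 : ℝ) 1) (h_half : 1 / 2 ≤ Pmap C t) (hz : Pmap C t ≤ Phi z) :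
    stdNormalPDF z * (√(2 * W) / (2 * √(-Real.log t))) ≤
      erasureExp t (fun ω => (#(pivotalSet (errorEvent C) ω) : ℝ)) +
        √W * ∑ w ∈ Icc 1 W, Aw C w * (√w * t ^ w) := by
  rw [Pmap_eq_erasureProb] at h_half hz
  have h_log : 0 < -Real.log t := neg_pos.2 (Real.log_neg ht.1 ht.2)
  have h_sqrt : √(-2 * Real.log t) * (√(2 * W) / (2 * √(-Real.log t))) = √W := by
    rw [show -2 * Real.log t = 2 * -Real.log t by ring, Real.sqrt_mul zero_le_two,
      Real.sqrt_mul zero_le_two]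
    have := (Real.sqrt_pos.2 h_log).ne'
    field_simp
    rw [Real.sq_sqrt zero_le_two, mul_comm]
  have h_profile : stdNormalPDF z ≤ gaussianProfile (erasureProb t (errorEvent C)) := by
    rw [← gaussianProfile_Phi]
    exact antitoneOn_gaussianProfile ⟨h_half, hz.trans (Phi_mem_Ioo z).2.le⟩
      ⟨h_half.trans hz, (Phi_mem_Ioo z).2.le⟩ hz
  have h_isoperimetry := (isIncreasing_errorEvent C).gaussianProfile_erasureProb_le ht
  refine le_trans ?_ (sqrt_mul_erasureExp_sqrt_card_pivotalSet_le C W (Set.Ioo_subset_Icc_self ht))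
  rw [← h_sqrt, mul_right_comm]
  exact mul_le_mul_of_nonneg_right (h_profile.trans h_isoperimetry) (by positivity)

theorem BEC_lower_general {N : ℕ} (C : Submodule (ZMod 2) (Pattern N)) (W : ℕ) {εstar ε : ℝ}
    (hεstar : 0 < εstar) (hhalf : 1 / 2 ≤ Pmap C εstar) (hle : εstar ≤ ε) (hε : ε < 1) :
    Phi (√(2 * W) * (√(-Real.log εstar) - √(-Real.log ε))) -
        √(-Real.log εstar) * √W * AW C W ε ≤ Pmap C ε := by
  have h_mem {t : ℝ} (ht : t ∈ Set.Icc εstar ε) : t ∈ Set.Ioo (0 : ℝ) 1 :=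
    ⟨hεstar.trans_le ht.1, ht.2.trans_lt hε⟩
  have h_half_le {t : ℝ} (ht : t ∈ Set.Icc εstar ε) : 1 / 2 ≤ Pmap C t :=
    hhalf.trans (monotoneOn_Pmap C ⟨hεstar, (hle.trans_lt hε).le⟩
      (Set.Ioo_subset_Ioc_self (h_mem ht)) ht.1)
  set z : ℝ → ℝ := fun t => √(2 * W) * (√(-Real.log εstar) - √(-Real.log t))
  have h_loss_nonneg {t : ℝ} (ht : t ∈ Set.Icc εstar ε) : 0 ≤ weightLoss C W εstar t :=
    weightLoss_nonneg C W hεstar.le ht.1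
  have h_compare : 0 ≤ Pmap C ε + weightLoss C W εstar ε - Phi (z ε) := by
    refine nonneg_of_deriv_nonneg_of_neg
      (D := fun t => Pmap C t + weightLoss C W εstar t - Phi (z t)) ?_ (fun t ht =>
        ((hasDerivAt_Pmap C (h_mem ht).1.ne').add
          (hasDerivAt_weightLoss C W εstar (h_mem ht).1.ne')).sub
        (hasDerivAt_Phi_mul_sub_sqrt_neg_log _ _ (h_mem ht))) (fun t ht h_neg => ?_) ε ⟨hle, le_rfl⟩
    · simpa only [z, sub_self, mul_zero, Phi_zero, weightLoss_self, add_zero, sub_nonneg]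
        using hhalf
    · have ht' := Set.Ico_subset_Icc_self ht
      have h_lt : Pmap C t ≤ Phi (z t) := by linarith [h_loss_nonneg ht']
      rw [← add_div, ← sub_div]
      exact div_nonneg (sub_nonneg.2 (stdNormalPDF_mul_le C W (h_mem ht') (h_half_le ht') h_lt))
        (h_mem ht').1.le
  linarith [weightLoss_le C W hεstar hle hε.le]

lemma Phi_sqrt_mul_sub_two_mul_le {N : ℕ} (C : Submodule (ZMod 2) (Pattern N)) (W : ℕ) {s t : ℝ}
    (hs : 0 < s) (hst : s ≤ t) :
    Phi (√W * (√(-Real.log s) - √(-Real.log t))) - 2 * √(-Real.log s) * √W * AW C W t ≤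
      Phi (√(2 * W) * (√(-Real.log s) - √(-Real.log t))) - √(-Real.log s) * √W * AW C W t := by
  have h_sqrt : √(-Real.log t) ≤ √(-Real.log s) :=
    Real.sqrt_le_sqrt (neg_le_neg (Real.log_le_log hs hst))
  have h_Phi := strictMono_Phi.monotone (mul_le_mul_of_nonneg_right
    (Real.sqrt_le_sqrt (le_mul_of_one_le_left W.cast_nonneg one_le_two)) (sub_nonneg.2 h_sqrt))
  have h_loss : 0 ≤ √(-Real.log s) * √W * AW C W t :=
    mul_nonneg (by positivity) (AW_nonneg C W (hs.le.trans hst))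
  linarith

theorem BEC_lower (N : ℕ) (C : Submodule (ZMod 2) (Pattern N))
    (εstar : ℝ) (hεstar : εstar ∈ Set.Ioo (0 : ℝ) 1)
    (hhalf : Pmap C εstar = 1 / 2) :
    ∀ W : ℕ, 1 ≤ W → W ≤ N → ∀ ε : ℝ, εstar < ε → ε < 1 →
      Pmap C ε ≥
        Phi (Real.sqrt W * (Real.sqrt (-Real.log εstar) - Real.sqrt (-Real.log ε)))
          - 2 * Real.sqrt (-Real.log εstar) * Real.sqrt W * AW C W ε := by
  exact fun W _ _ ε hlt hε => (Phi_sqrt_mul_sub_two_mul_le C W hεstar.1 hlt.le).trans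
    (BEC_lower_general C W hεstar.1 hhalf.ge hlt.le hε)

end
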